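/- arXiv:0807.2080 — 13 statements merged into one kernel-verified Lean document; each statement's English description precedes it below -/
import Mathlib

section
/- For all n ≥ 1 and all u = (z,x), v = (z',x') in V = (Fin n → ZMod 2) × (Fin n → ZMod 2), one has N_u * N_v = (−1)^{s} • N_{u+v}, where s ∈ {0,1} is the representative of ∑ i, x i * z' i ∈ ZMod 2. In particular the map u ↦ N_u is, up to sign, a homomorphism from the additive group V to the multiplicative group of 2^n × 2^n matrices. -/
/-!
The tensor product is multiplicative (`tensorPow_mul`), so `NPauli u` is the tensor product of the
one-qubit matrices `Z ^ zᵢ * X ^ xᵢ`, and the claim reduces to one qubit. There it follows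
from the commutation relation `X * Z = -(Z * X)` together with `X ^ 2 = Z ^ 2 = 1`
(`pauli_mul_qubit`). The signs from the individual qubits multiply up because
`a ↦ (-1) ^ a.val` turns sums in `ZMod 2` into products (`neg_one_pow_val_sum`).
-/

/-- The phase space `(ℤ₂)ⁿ × (ℤ₂)ⁿ` of `n`-qubit Pauli labels. -/
abbrev V (n : ℕ) : Type := (Fin n → ZMod 2) × (Fin n → ZMod 2)

/-- The single-qubit Pauli `X` matrix. -/
noncomputable def PauliX : Matrix (Fin 2) (Fin 2) ℂ := !![0, 1; 1, 0]

/-- The single-qubit Pauli `Z` matrix. -/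
noncomputable def PauliZ : Matrix (Fin 2) (Fin 2) ℂ := !![1, 0; 0, -1]

/-- The `n`-fold tensor (Kronecker) product of a family of `2 × 2` matrices,
realized as a matrix indexed by `Fin n → Fin 2` (a `2ⁿ × 2ⁿ` matrix). -/
noncomputable def tensorPow {n : ℕ} (M : Fin n → Matrix (Fin 2) (Fin 2) ℂ) :
    Matrix (Fin n → Fin 2) (Fin n → Fin 2) ℂ :=
  Matrix.of fun f g => ∏ i, M i (f i) (g i)

/-- The `n`-qubit Pauli matrix `N_{(z,x)} = (⨂ᵢ Z^{zᵢ}) * (⨂ᵢ X^{xᵢ})`. -/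
noncomputable def NPauli {n : ℕ} (u : V n) :
    Matrix (Fin n → Fin 2) (Fin n → Fin 2) ℂ :=
  tensorPow (fun i => PauliZ ^ (u.1 i).val) * tensorPow (fun i => PauliX ^ (u.2 i).val)

theorem tensorPow_mul {n : ℕ} (A B : Fin n → Matrix (Fin 2) (Fin 2) ℂ) :
    tensorPow A * tensorPow B = tensorPow (fun i => A i * B i) := by
  ext f g
  simp only [tensorPow, Matrix.mul_apply, Matrix.of_apply, ← Finset.prod_mul_distrib]
  exact (Fintype.prod_sum fun i k => A i (f i) k * B i k (g i)).symm

theorem tensorPow_smul {n : ℕ} (c : Fin n → ℂ) (A : Fin n → Matrix (Fin 2) (Fin 2) ℂ) :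
    tensorPow (fun i => c i • A i) = (∏ i, c i) • tensorPow A := by
  ext f g
  simp [tensorPow, Finset.prod_mul_distrib]

theorem neg_one_pow_val_add (a b : ZMod 2) :
    (-1 : ℂ) ^ (a + b).val = (-1) ^ a.val * (-1) ^ b.val := by
  rw [ZMod.val_add, ← pow_add, neg_one_pow_eq_pow_mod_two (n := a.val + b.val)]

theorem neg_one_pow_val_sum {n : ℕ} (a : Fin n → ZMod 2) :
    (-1 : ℂ) ^ (∑ i, a i).val = ∏ i, (-1 : ℂ) ^ (a i).val := by
  induction n with
  | zero => simp
  | succ n ih => rw [Fin.sum_univ_succ, Fin.prod_univ_succ, neg_one_pow_val_add, ih]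

theorem pauliX_mul_self : PauliX * PauliX = 1 := by
  simp [PauliX, Matrix.one_fin_two]

theorem pauliZ_mul_self : PauliZ * PauliZ = 1 := by
  simp [PauliZ, Matrix.one_fin_two]

theorem pauliX_mul_pauliZ : PauliX * PauliZ = -(PauliZ * PauliX) := by
  simp [PauliX, PauliZ]

/-- Squares of `P` are trivial, so its powers only depend on the exponent modulo two. -/
theorem pow_val_add {P : Matrix (Fin 2) (Fin 2) ℂ} (h : P * P = 1) (a b : ZMod 2) :
    P ^ (a + b).val = P ^ a.val * P ^ b.val := by
  rw [ZMod.val_add, ← pow_add, ← pow_eq_pow_mod _ (by rw [pow_two, h])]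

theorem pauliX_pow_mul_pauliZ_pow (x z : ZMod 2) :
    PauliX ^ x.val * PauliZ ^ z.val =
      ((-1 : ℂ) ^ (x * z).val) • (PauliZ ^ z.val * PauliX ^ x.val) := by
  -- Unless both exponents are one, one of the two factors is the identity.
  obtain rfl | rfl : x = 0 ∨ x = 1 := by revert x; decide
  · simp
  obtain rfl | rfl : z = 0 ∨ z = 1 := by revert z; decide
  · simp
  simp [ZMod.val_one, pauliX_mul_pauliZ]

/-- The one-qubit case: moving `Z ^ z'` to the left past `X ^ x` produces the sign. -/
theorem pauli_mul_qubit (z x z' x' : ZMod 2) :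
    (PauliZ ^ z.val * PauliX ^ x.val) * (PauliZ ^ z'.val * PauliX ^ x'.val) =
      ((-1 : ℂ) ^ (x * z').val) • (PauliZ ^ (z + z').val * PauliX ^ (x + x').val) := by
  rw [pow_val_add pauliZ_mul_self, pow_val_add pauliX_mul_self, Matrix.mul_assoc,
    ← Matrix.mul_assoc (PauliX ^ x.val), pauliX_pow_mul_pauliZ_pow]
  simp only [Matrix.smul_mul, Matrix.mul_smul, Matrix.mul_assoc]

/-- The map `u ↦ N_u` is a homomorphism up to sign:
`N_u N_v = (−1)^{∑ i, x_i z'_i} N_{u+v}` for `u = (z,x)` and `v = (z',x')`. -/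
theorem pauli_mul (n : ℕ) (hn : 1 ≤ n) (u v : V n) :
    NPauli u * NPauli v =
      ((-1 : ℂ) ^ (∑ i, u.2 i * v.1 i : ZMod 2).val) • NPauli (u + v) := by
  simp only [NPauli, tensorPow_mul, neg_one_pow_val_sum, ← tensorPow_smul, pauli_mul_qubit,
    Prod.fst_add, Prod.snd_add, Pi.add_apply]
end

section
/- Let F₄ := GaloisField 2 2 and fix ω ∈ F₄ with ω² + ω + 1 = 0. Let H : Matrix (Fin m) (Fin n) F₄ and d ≥ 1. Assume that for every nonzero a : Fin n → F₄ with #{i : a i ≠ 0} < d there exists a row index j with ∑ i, (H j i)² * a i ≠ 0. Then for every nonzero pair (z,x) ∈ (Fin n → ZMod 2) × (Fin n → ZMod 2) with #{i : z i ≠ 0 ∨ x i ≠ 0} < d, there exist a row index j and e ∈ {ω, ω²} such that ∑ i, (γ₁(e * H j i) * x i + z i * γ₂(e * H j i)) ≠ 0 in ZMod 2. (That is, a classical [n,k,d] quaternary code yields an [n,2k−n,d] symplectic code whose parity check matrix has rows γ(ω·h_j) and γ(ω²·h_j).) -/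
/-!
Put `a i = z i • ω + x i • ω²`, so that `a` has the same support as the pair `(z, x)`. The
symplectic product of `γ b` with `(z, x)` is the trace `b² a + (b² a)² = b² a + b a²`
(`symplectic_eq_trace`, one coordinate at a time). Hence, with `u = ∑ i, (H j i)² * a i` and
`v = ∑ i, H j i * (a i)²`, the product of `γ(e • row j)` with `(z, x)` is `e² u + e v`. If it
vanishes for both `e = ω` and `e = ω²`, then `ω² u + ω v = 0 = ω u + ω² v`, which forces `u = 0`;
but some row `j` has `u ≠ 0` by the distance hypothesis.
-/

/-- The symplectic product of the coordinate vectors of `p ω + q ω²` and `z ω + x ω²` is the trace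
to `ℤ₂` of the product of one with the conjugate of the other. -/
lemma symplectic_eq_trace (ω : GaloisField 2 2) (hω : ω ^ 2 + ω + 1 = 0) (p q z x : ZMod 2) :
    algebraMap (ZMod 2) (GaloisField 2 2) (p * x + z * q) =
      (p.val • ω + q.val • ω ^ 2) ^ 2 * (z.val • ω + x.val • ω ^ 2) +
      (p.val • ω + q.val • ω ^ 2) * (z.val • ω + x.val • ω ^ 2) ^ 2 := by
  have h2 : (2 : GaloisField 2 2) = 0 := CharTwo.two_eq_zero
  have hv : ∀ c : ZMod 2, ((c.val : ℕ) : GaloisField 2 2) = algebraMap (ZMod 2) _ c := by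
    intro c
    rw [← map_natCast (algebraMap (ZMod 2) (GaloisField 2 2)), ZMod.natCast_zmod_val]
  have hs : ∀ c : ZMod 2, algebraMap (ZMod 2) (GaloisField 2 2) c ^ 2 = algebraMap _ _ c := by
    intro c
    rw [← map_pow, ZMod.pow_card]
  simp only [nsmul_eq_mul, hv, map_add, map_mul]
  have hp := hs p
  have hq := hs q
  have hz := hs z
  have hx := hs x
  generalize algebraMap (ZMod 2) (GaloisField 2 2) p = p at *
  generalize algebraMap (ZMod 2) (GaloisField 2 2) q = q at *
  generalize algebraMap (ZMod 2) (GaloisField 2 2) z = z at *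
  generalize algebraMap (ZMod 2) (GaloisField 2 2) x = x at *
  grind

/-- `ω` and `ω²` are linearly independent over `ℤ₂`. -/
lemma combo_ne_zero_iff (ω : GaloisField 2 2) (hω : ω ^ 2 + ω + 1 = 0) (z x : ZMod 2) :
    z.val • ω + x.val • ω ^ 2 ≠ 0 ↔ z ≠ 0 ∨ x ≠ 0 := by
  have h0 : ω ≠ 0 := by
    rintro rfl
    simp at hω
  have h1 : ω + ω ^ 2 ≠ 0 := by
    intro h
    have : (1 : GaloisField 2 2) = 0 := by linear_combination hω - h
    exact one_ne_zero this
  have v1 : ZMod.val (1 : ZMod 2) = 1 := rfl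
  have hc : ∀ c : ZMod 2, c = 0 ∨ c = 1 := by decide
  rcases hc z with rfl | rfl <;> rcases hc x with rfl | rfl <;> simp [v1, h0, h1]

/-- A classical `[n,k,d]` quaternary code (given by a parity check matrix `H` over
`𝔽₄ = GaloisField 2 2`, with distance `d` expressed via the Hermitian inner product
`∑ i, (H j i)² * a i`) yields an `[n,2k−n,d]` symplectic code: the parity check matrix
with rows `γ(ω·h_j)` and `γ(ω²·h_j)` detects (w.r.t. the symplectic product) every
nonzero binary pair `(z,x)` of symplectic weight less than `d`.  Here `γ = (γ₁, γ₂)`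
is the decomposition of `𝔽₄` in the `ℤ₂`-basis `{ω, ω²}`, where `ω² + ω + 1 = 0`. -/
theorem quaternary_to_symplectic (m n d : ℕ) (hd : 1 ≤ d)
    (ω : GaloisField 2 2) (hω : ω ^ 2 + ω + 1 = 0)
    (γ₁ γ₂ : GaloisField 2 2 → ZMod 2)
    (hγ : ∀ b : GaloisField 2 2, b = (γ₁ b).val • ω + (γ₂ b).val • ω ^ 2)
    (H : Matrix (Fin m) (Fin n) (GaloisField 2 2))
    (hH : ∀ a : Fin n → GaloisField 2 2, a ≠ 0 →
      ({i | a i ≠ 0} : Set (Fin n)).ncard < d →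
      ∃ j, ∑ i, (H j i) ^ 2 * a i ≠ 0) :
    ∀ z x : Fin n → ZMod 2, (z, x) ≠ (0, 0) →
      ({i | z i ≠ 0 ∨ x i ≠ 0} : Set (Fin n)).ncard < d →
      ∃ j, ∃ e ∈ ({ω, ω ^ 2} : Set (GaloisField 2 2)),
        ∑ i, (γ₁ (e * H j i) * x i + z i * γ₂ (e * H j i)) ≠ 0 := by
  intro z x hzx hw
  have ha : (fun i => (z i).val • ω + (x i).val • ω ^ 2) ≠ 0 := by
    intro h
    apply hzx
    have h' : ∀ i, ¬ (z i ≠ 0 ∨ x i ≠ 0) := fun i hi =>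
      (combo_ne_zero_iff ω hω (z i) (x i)).2 hi (congrFun h i)
    push Not at h'
    exact Prod.ext (funext fun i => (h' i).1) (funext fun i => (h' i).2)
  obtain ⟨j, hj⟩ := hH _ ha (by simpa only [combo_ne_zero_iff ω hω] using hw)
  refine ⟨j, ?_⟩
  by_contra! hcon
  have key : ∀ e : GaloisField 2 2,
      ∑ i, (γ₁ (e * H j i) * x i + z i * γ₂ (e * H j i)) = 0 →
      e ^ 2 * ∑ i, (H j i) ^ 2 * ((z i).val • ω + (x i).val • ω ^ 2) +
        e * ∑ i, H j i * ((z i).val • ω + (x i).val • ω ^ 2) ^ 2 = 0 := by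
    intro e he
    have h := congrArg (algebraMap (ZMod 2) (GaloisField 2 2)) he
    rw [map_sum, map_zero] at h
    rw [← h, Finset.mul_sum, Finset.mul_sum, ← Finset.sum_add_distrib]
    refine Finset.sum_congr rfl fun i _ => ?_
    rw [symplectic_eq_trace ω hω, ← hγ]
    ring
  have k1 := key ω (hcon ω (by simp))
  have k2 := key (ω ^ 2) (hcon (ω ^ 2) (by simp))
  have h2 : (2 : GaloisField 2 2) = 0 := CharTwo.two_eq_zero
  apply hj
  generalize ∑ i, (H j i) ^ 2 * ((z i).val • ω + (x i).val • ω ^ 2) = u at *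
  generalize ∑ i, H j i * ((z i).val • ω + (x i).val • ω ^ 2) ^ 2 = v at *
  grind
end

section
/- Let H : Matrix (Fin m) (Fin n) (ZMod 2) and let W be the ZMod 2-subspace of V = (Fin n → ZMod 2) × (Fin n → ZMod 2) spanned by the 2m vectors (H j, 0) and (0, H j) for j ∈ Fin m (where H j denotes the j-th row of H). Then finrank W − finrank rad(W) = 2 * (H * Hᵀ).rank, where rad(W) := {w ∈ W : ∀ u ∈ W, ⟨w,u⟩ = 0}. (In the entanglement-assisted CSS construction from H, the number of ebits needed is c = rank(H Hᵀ).) -/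
/-!
Let `R` be the row space of `H`, i.e. the range of `Hᵀ`, and `K = ker H`. Then `W = R × R`
(`css_span_eq_prod`), and since `K` is the dot-product complement of `R`, the symplectic complement
of `W` is `K × K` (`sOrth_css`). Hence `rad W = (R ⊓ K) × (R ⊓ K)`. Rank–nullity for `H` restricted
to `R`, whose image is the range of `H * Hᵀ`, gives `dim R - dim (R ⊓ K) = rank (H * Hᵀ)`
(`rank_add_finrank_rowSpace_inf_ker`), and the two factors of the product double this.
-/

open Matrix

/-- The symplectic product `⟨(z,x),(z',x')⟩ = ∑ i, (z i * x' i + z' i * x i)`. -/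
def sp {n : ℕ} (u v : V n) : ZMod 2 :=
  ∑ i, (u.1 i * v.2 i + v.1 i * u.2 i)

lemma sp_add_left {n : ℕ} (a b u : V n) : sp (a + b) u = sp a u + sp b u := by
  simp only [sp, ← Finset.sum_add_distrib]
  refine Finset.sum_congr rfl fun i _ => ?_
  simp only [Prod.fst_add, Prod.snd_add, Pi.add_apply]
  ring

lemma sp_zero_left {n : ℕ} (u : V n) : sp (0 : V n) u = 0 := by
  simp [sp]

/-- The symplectic orthogonal complement `{v | ∀ u ∈ W, ⟨v,u⟩ = 0}` of a subspace `W`. -/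
def sOrth {n : ℕ} (W : Submodule (ZMod 2) (V n)) : Submodule (ZMod 2) (V n) where
  carrier := {v | ∀ u ∈ W, sp v u = 0}
  zero_mem' := by
    intro u hu
    exact sp_zero_left u
  add_mem' := by
    intro a b ha hb u hu
    rw [sp_add_left, ha u hu, hb u hu, add_zero]
  smul_mem' := by
    intro c a ha
    rcases (show ∀ x : ZMod 2, x = 0 ∨ x = 1 by decide) c with h | h
    · subst h
      intro u hu
      rw [zero_smul]
      exact sp_zero_left u
    · subst h
      intro u hu
      rw [one_smul]
      exact ha u hu

/-- The CSS subspace splits as `R × R`, where `R` is the row space of `H`. -/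
lemma css_span_eq_prod {m n : ℕ} (H : Matrix (Fin m) (Fin n) (ZMod 2)) :
    Submodule.span (ZMod 2)
      ((Set.range fun j : Fin m => ((H j, 0) : V n)) ∪
       (Set.range fun j : Fin m => (((0 : Fin n → ZMod 2), H j) : V n))) =
    (LinearMap.range Hᵀ.mulVecLin).prod (LinearMap.range Hᵀ.mulVecLin) := by
  have hrange : LinearMap.range Hᵀ.mulVecLin = Submodule.span (ZMod 2) (Set.range H.row) := by
    rw [Matrix.range_mulVecLin]
    rfl
  have hl : (Set.range fun j : Fin m => ((H j, 0) : V n)) =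
      LinearMap.inl (ZMod 2) (Fin n → ZMod 2) (Fin n → ZMod 2) '' Set.range H.row := by
    exact Set.range_comp (LinearMap.inl (ZMod 2) (Fin n → ZMod 2) (Fin n → ZMod 2)) H.row
  have hr : (Set.range fun j : Fin m => (((0 : Fin n → ZMod 2), H j) : V n)) =
      LinearMap.inr (ZMod 2) (Fin n → ZMod 2) (Fin n → ZMod 2) '' Set.range H.row := by
    exact Set.range_comp (LinearMap.inr (ZMod 2) (Fin n → ZMod 2) (Fin n → ZMod 2)) H.row
  rw [hl, hr, hrange, LinearMap.span_inl_union_inr]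

/-- The symplectic complement of `R × R` is `K × K`, where `K = ker H` is the complement of the
row space `R` for the dot product. -/
lemma sOrth_css {m n : ℕ} (H : Matrix (Fin m) (Fin n) (ZMod 2)) :
    sOrth ((LinearMap.range Hᵀ.mulVecLin).prod (LinearMap.range Hᵀ.mulVecLin)) =
    (LinearMap.ker H.mulVecLin).prod (LinearMap.ker H.mulVecLin) := by
  have hsp : ∀ (v : V n) (a b : Fin m → ZMod 2),
      sp v (Hᵀ *ᵥ a, Hᵀ *ᵥ b) = (H *ᵥ v.1) ⬝ᵥ b + (H *ᵥ v.2) ⬝ᵥ a := by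
    intro v a b
    have h : sp v (Hᵀ *ᵥ a, Hᵀ *ᵥ b) = v.1 ⬝ᵥ (Hᵀ *ᵥ b) + v.2 ⬝ᵥ (Hᵀ *ᵥ a) := by
      simp only [sp, dotProduct, Finset.sum_add_distrib, mul_comm]
    rw [h, dotProduct_mulVec, dotProduct_mulVec, vecMul_transpose, vecMul_transpose]
  ext v
  constructor
  · intro hv
    have key : ∀ a b : Fin m → ZMod 2, (H *ᵥ v.1) ⬝ᵥ b + (H *ᵥ v.2) ⬝ᵥ a = 0 := fun a b => by
      rw [← hsp]
      exact hv _ ⟨⟨a, rfl⟩, ⟨b, rfl⟩⟩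
    refine ⟨dotProduct_eq_zero _ fun b => ?_, dotProduct_eq_zero _ fun a => ?_⟩
    · simpa using key 0 b
    · simpa using key a 0
  · rintro ⟨h1, h2⟩ ⟨_, _⟩ ⟨⟨a, rfl⟩, ⟨b, rfl⟩⟩
    have h1' : H *ᵥ v.1 = 0 := h1
    have h2' : H *ᵥ v.2 = 0 := h2
    have h := hsp v a b
    rw [h1', h2', zero_dotProduct, zero_dotProduct, add_zero] at h
    exact h

lemma finrank_prod_self {n : ℕ} (S : Submodule (ZMod 2) (Fin n → ZMod 2)) :
    Module.finrank (ZMod 2) (S.prod S) = 2 * Module.finrank (ZMod 2) S := by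
  have h := LinearMap.finrank_range_of_inj (f := S.subtype.prodMap S.subtype)
    (Function.Injective.prodMap S.injective_subtype S.injective_subtype)
  rwa [LinearMap.range_prodMap, S.range_subtype, Module.finrank_prod, ← two_mul] at h

/-- Rank–nullity for `H` restricted to its row space: the image is the range of `H * Hᵀ`. -/
lemma rank_add_finrank_rowSpace_inf_ker {m n : ℕ} (H : Matrix (Fin m) (Fin n) (ZMod 2)) :
    (H * Hᵀ).rank +
      Module.finrank (ZMod 2) ↥(LinearMap.range Hᵀ.mulVecLin ⊓ LinearMap.ker H.mulVecLin) =
    Module.finrank (ZMod 2) (LinearMap.range Hᵀ.mulVecLin) := by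
  set R := LinearMap.range Hᵀ.mulVecLin with hR
  have h := (H.mulVecLin.domRestrict R).finrank_range_add_finrank_ker
  have h1 : LinearMap.range (H.mulVecLin.domRestrict R) = LinearMap.range (H * Hᵀ).mulVecLin := by
    rw [LinearMap.range_domRestrict, Matrix.mulVecLin_mul, LinearMap.range_comp]
  have h2 : Module.finrank (ZMod 2) (LinearMap.ker (H.mulVecLin.domRestrict R)) =
      Module.finrank (ZMod 2) ↥(R ⊓ LinearMap.ker H.mulVecLin) := by
    rw [LinearMap.ker_domRestrict, ← Submodule.map_comap_subtype]
    exact (Submodule.finrank_map_subtype_eq R _).symm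
  rwa [h1, h2] at h

/-- For the CSS subspace `W` spanned by the rows `(H j, 0)` and `(0, H j)` of
`diag(H,H)`, the dimension of `W` minus the dimension of its radical
`rad(W) = W ⊓ W^⊥` equals `2 · rank(H Hᵀ)`; i.e. the number of ebits needed in the
entanglement-assisted CSS construction is `c = rank(H Hᵀ)`. -/
theorem css_ebits_eq_rank (m n : ℕ) (H : Matrix (Fin m) (Fin n) (ZMod 2))
    (W : Submodule (ZMod 2) (V n))
    (hW : W = Submodule.span (ZMod 2)
      ((Set.range fun j : Fin m => ((H j, 0) : V n)) ∪
       (Set.range fun j : Fin m => (((0 : Fin n → ZMod 2), H j) : V n)))) :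
    Module.finrank (ZMod 2) W - Module.finrank (ZMod 2) ↥(W ⊓ sOrth W)
      = 2 * (H * Hᵀ).rank := by
  subst hW
  rw [css_span_eq_prod, sOrth_css, Submodule.prod_inf_prod, finrank_prod_self,
    finrank_prod_self, ← rank_add_finrank_rowSpace_inf_ker H]
  omega
end

section
/- Let A : Matrix (Fin n) (Fin n) (ZMod 2) be symmetric (Aᵀ = A). Then there exist an invertible matrix P : Matrix (Fin n) (Fin n) (ZMod 2) and natural numbers p, q with p + 2*q = A.rank and p + 2*q ≤ n such that B := P * A * Pᵀ has the normal form: B i i = 1 for i < p; B (p+2t) (p+2t+1) = 1 and B (p+2t+1) (p+2t) = 1 for t < q; and all other entries of B are 0. -/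
/-!
The proof is symmetric Gaussian elimination over `𝔽₂`, by strong induction on the size.

If `A` has a diagonal entry `1`, that `1 × 1` block is a pivot; if the diagonal of `A` vanishes but
`A i j ≠ 0`, the rows and columns `i, j` carry the pivot `!![0, 1; 1, 0]`. Either pivot `H` satisfies
`H * H = 1`, so `Congruent.exists_schur` splits it off: `A` is congruent to `H ⊕ D` with `D`
symmetric, and the induction hypothesis applies to `D`. In the first case a leading `1` is put in
front of the normal form of `D`. In the second case `A` is alternating, an invariant of congruence
(`Congruent.diag_eq_zero`), so the normal form of `D` has no identity block and the hyperbolic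
pivot can be put in front of it.

The normal form is, up to a permutation of its columns, a diagonal matrix with `p + 2 * q` ones,
which gives its rank.
-/

open Matrix

namespace SymmetricNormalForm

/-- The involution of `ℕ` that swaps `p + 2 * t` and `p + 2 * t + 1` for `t < q` and fixes every
other number. -/
def partner (p q k : ℕ) : ℕ :=
  if k < p ∨ p + 2 * q ≤ k then k else if (k - p) % 2 = 0 then k + 1 else k - 1

theorem partner_partner (p q k : ℕ) : partner p q (partner p q k) = k := by
  unfold partner
  grind

theorem partner_lt {p q n k : ℕ} (h : p + 2 * q ≤ n) (hk : k < n) : partner p q k < n := by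
  unfold partner
  grind

/-- The `n × n` normal form: row `i < p + 2 * q` has its only nonzero entry in column
`partner p q i`, and the other rows are zero. -/
def normalForm (p q n : ℕ) : Matrix (Fin n) (Fin n) (ZMod 2) :=
  of fun i j => if (i : ℕ) < p + 2 * q ∧ (j : ℕ) = partner p q i then 1 else 0

theorem rank_normalForm {p q n : ℕ} (h : p + 2 * q ≤ n) :
    (normalForm p q n).rank = p + 2 * q := by
  let s : Fin n → Fin n := fun i => ⟨partner p q i, partner_lt h i.2⟩
  have hs : Function.Involutive s := fun i => Fin.ext (partner_partner p q i)
  have key : normalForm p q n =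
      (diagonal fun i : Fin n => if (i : ℕ) < p + 2 * q then (1 : ZMod 2) else 0).submatrix
        (Equiv.refl _) hs.toPerm := by
    ext i j
    have hij : (j : ℕ) = partner p q i ↔ i = s j := by
      rw [Fin.ext_iff]
      constructor <;> intro e
      · simp only [s, e, partner_partner]
      · simp only [s] at e
        rw [e, partner_partner]
    simp only [normalForm, of_apply, submatrix_apply, Equiv.refl_apply,
      Function.Involutive.coe_toPerm, diagonal_apply, hij]
    grind
  rw [key, rank_submatrix, rank_diagonal]
  have : ∀ i : Fin n, ((if (i : ℕ) < p + 2 * q then (1 : ZMod 2) else 0) ≠ 0) ↔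
      (i : ℕ) < p + 2 * q := by
    intro i
    split_ifs <;> simp_all
  rw [Fintype.card_congr (Equiv.subtypeEquivRight this), Fintype.card_subtype,
    Fin.card_filter_val_lt]
  omega

theorem normalForm_succ_left (p q n : ℕ) :
    (normalForm (p + 1) q (1 + n)).submatrix finSumFinEquiv finSumFinEquiv =
      fromBlocks 1 0 0 (normalForm p q n) := by
  ext (i | i) (j | j)
  all_goals
    simp only [normalForm, partner, submatrix_apply, of_apply, fromBlocks_apply₁₁,
      fromBlocks_apply₁₂, fromBlocks_apply₂₁, fromBlocks_apply₂₂, finSumFinEquiv_apply_left,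
      finSumFinEquiv_apply_right, Fin.val_castAdd, Fin.val_natAdd, one_apply, Matrix.zero_apply,
      Fin.ext_iff]
    grind

theorem normalForm_succ_right (q n : ℕ) :
    (normalForm 0 (q + 1) (2 + n)).submatrix finSumFinEquiv finSumFinEquiv =
      fromBlocks !![0, 1; 1, 0] 0 0 (normalForm 0 q n) := by
  ext (i | i) (j | j)
  · fin_cases i <;> fin_cases j <;> simp [normalForm, partner]; omega
  all_goals
    simp only [normalForm, partner, submatrix_apply, of_apply,
      fromBlocks_apply₁₂, fromBlocks_apply₂₁, fromBlocks_apply₂₂, finSumFinEquiv_apply_left,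
      finSumFinEquiv_apply_right, Fin.val_castAdd, Fin.val_natAdd, Matrix.zero_apply]
    grind

/-- Congruence of square matrices with possibly different index types: `P * A * Pᵀ = B` for some
`P` with two-sided inverse `Q`. Reindexing is a special case. -/
def Congruent {m n : Type*} [Fintype m] [Fintype n] [DecidableEq m] [DecidableEq n]
    (A : Matrix m m (ZMod 2)) (B : Matrix n n (ZMod 2)) : Prop :=
  ∃ (P : Matrix n m (ZMod 2)) (Q : Matrix m n (ZMod 2)), P * Q = 1 ∧ Q * P = 1 ∧ P * A * Pᵀ = B

theorem card_compl_range {k m : Type*} [Fintype k] [Fintype m] {f : k → m}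
    (hf : Function.Injective f) [Fintype {x // x ∉ Set.range f}] :
    Fintype.card k + Fintype.card {x // x ∉ Set.range f} = Fintype.card m := by
  classical
  rw [← Fintype.card_sum]
  exact Fintype.card_congr (((Equiv.ofInjective f hf).sumCongr (Equiv.refl _)).trans
    (Equiv.sumCompl (· ∈ Set.range f)))

variable {l m n k : Type*} [Fintype l] [Fintype m] [Fintype n] [Fintype k]
  [DecidableEq l] [DecidableEq m] [DecidableEq n] [DecidableEq k]

theorem Congruent.trans {A : Matrix l l (ZMod 2)} {B : Matrix m m (ZMod 2)}
    {C : Matrix n n (ZMod 2)} (h : Congruent A B) (h' : Congruent B C) : Congruent A C := by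
  obtain ⟨P, Q, hPQ, hQP, rfl⟩ := h
  obtain ⟨P', Q', hPQ', hQP', rfl⟩ := h'
  refine ⟨P' * P, Q * Q', ?_, ?_, ?_⟩
  · rw [Matrix.mul_assoc, ← Matrix.mul_assoc P, hPQ, Matrix.one_mul, hPQ']
  · rw [Matrix.mul_assoc, ← Matrix.mul_assoc Q', hQP', Matrix.one_mul, hQP]
  · simp only [transpose_mul, Matrix.mul_assoc]

theorem Congruent.submatrix (A : Matrix m m (ZMod 2)) (e : n ≃ m) :
    Congruent A (A.submatrix e e) := by
  refine ⟨(1 : Matrix m m (ZMod 2)).submatrix e id, (1 : Matrix m m (ZMod 2)).submatrix id e,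
    ?_, ?_, ?_⟩
  · rw [← submatrix_mul _ _ _ _ _ Function.bijective_id]
    simp
  · rw [← submatrix_mul _ _ _ _ _ e.bijective]
    simp
  · ext i j
    simp [mul_apply, one_apply]

theorem Congruent.fromBlocks (H : Matrix k k (ZMod 2)) {D : Matrix m m (ZMod 2)}
    {E : Matrix n n (ZMod 2)} (h : Congruent D E) :
    Congruent (fromBlocks H 0 0 D) (fromBlocks H 0 0 E) := by
  obtain ⟨P, Q, hPQ, hQP, rfl⟩ := h
  refine ⟨Matrix.fromBlocks 1 0 0 P, Matrix.fromBlocks 1 0 0 Q, ?_, ?_, ?_⟩ <;>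
    simp [fromBlocks_multiply, fromBlocks_transpose, hPQ, hQP]

/-- Being alternating is invariant under congruence: with `M` the strict upper triangle of `A`
(for some enumeration of the index type) one has `A = M + Mᵀ`, so `P * A * Pᵀ` is again of the
form `N + Nᵀ`, whose diagonal is `2 * N i i = 0`. -/
theorem Congruent.diag_eq_zero {A : Matrix m m (ZMod 2)} {B : Matrix n n (ZMod 2)}
    (h : Congruent A B) (hA : Aᵀ = A) (hd : ∀ i, A i i = 0) (j : n) : B j j = 0 := by
  obtain ⟨P, Q, -, -, rfl⟩ := h
  let e := Fintype.equivFin m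
  let M : Matrix m m (ZMod 2) := of fun i j => if e i < e j then A i j else 0
  have hM : A = M + Mᵀ := by
    ext i j
    have hs : A j i = A i j := congrFun (congrFun hA i) j
    simp only [M, Matrix.add_apply, of_apply, transpose_apply, hs]
    rcases lt_trichotomy (e i) (e j) with h | h | h
    · simp [h, h.not_gt]
    · obtain rfl := e.injective h
      simp [hd]
    · simp [h, h.not_gt]
  have hN : P * A * Pᵀ = P * M * Pᵀ + (P * M * Pᵀ)ᵀ := by
    rw [hM]
    simp only [transpose_mul, transpose_transpose, Matrix.mul_add, Matrix.add_mul,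
      Matrix.mul_assoc]
  rw [hN, Matrix.add_apply, transpose_apply]
  exact CharTwo.add_self_eq_zero _

/-- A principal block `H` with `H * H = 1` splits off as an orthogonal summand. -/
theorem Congruent.exists_schur {A : Matrix m m (ZMod 2)} (hA : Aᵀ = A) {f : k → m}
    (hf : Function.Injective f) {H : Matrix k k (ZMod 2)} (hH : A.submatrix f f = H)
    (hHH : H * H = 1) :
    ∃ D : Matrix {x // x ∉ Set.range f} {x // x ∉ Set.range f} (ZMod 2), Dᵀ = D ∧
      Congruent A (Matrix.fromBlocks H 0 0 D) := by
  classical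
  let e : k ⊕ {x // x ∉ Set.range f} ≃ m :=
    ((Equiv.ofInjective f hf).sumCongr (Equiv.refl _)).trans (Equiv.sumCompl (· ∈ Set.range f))
  let C : Matrix {x // x ∉ Set.range f} k (ZMod 2) := A.submatrix Subtype.val f
  let D : Matrix {x // x ∉ Set.range f} {x // x ∉ Set.range f} (ZMod 2) :=
    A.submatrix Subtype.val Subtype.val
  have hHt : Hᵀ = H := by rw [← hH, transpose_submatrix, hA]
  have hDt : Dᵀ = D := by rw [transpose_submatrix, hA]
  have hCt : A.submatrix f Subtype.val = Cᵀ := by rw [transpose_submatrix, hA]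
  have hblock : A.submatrix e e = Matrix.fromBlocks H Cᵀ C D := by
    rw [← hH, ← hCt]
    ext (i | i) (j | j) <;> rfl
  refine ⟨D + C * H * Cᵀ, ?_, (Congruent.submatrix A e).trans ?_⟩
  · simp only [transpose_add, transpose_mul, transpose_transpose, hDt, hHt, Matrix.mul_assoc]
  have hC : C + C = 0 := Matrix.ext fun _ _ => CharTwo.add_self_eq_zero _
  have hCH : C * H + C * H = 0 := Matrix.ext fun _ _ => CharTwo.add_self_eq_zero _
  rw [hblock]
  refine ⟨Matrix.fromBlocks 1 0 (C * H) 1, Matrix.fromBlocks 1 0 (C * H) 1, ?_, ?_, ?_⟩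
  · simp [fromBlocks_multiply, hCH]
  · simp [fromBlocks_multiply, hCH]
  · have hCt' : Cᵀ + Cᵀ = 0 := Matrix.ext fun _ _ => CharTwo.add_self_eq_zero _
    have h1 : C * H * H = C := by rw [Matrix.mul_assoc, hHH, Matrix.mul_one]
    have h2 : H * (H * Cᵀ) = Cᵀ := by rw [← Matrix.mul_assoc, hHH, Matrix.one_mul]
    simp [fromBlocks_multiply, fromBlocks_transpose, hHt, h1, h2, hC, hCt', add_comm]

theorem zmod_two_cases : ∀ x : ZMod 2, x = 0 ∨ x = 1 := by
  decide

theorem exists_congruent_normalForm (N : ℕ) : ∀ (m : Type) [Fintype m] [DecidableEq m]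
    (A : Matrix m m (ZMod 2)), Aᵀ = A → Fintype.card m = N →
    ∃ p q : ℕ, p + 2 * q ≤ N ∧ Congruent A (normalForm p q N) := by
  induction N using Nat.strong_induction_on with
  | _ N ih =>
  intro m _ _ A hA hN
  by_cases hd : ∃ i, A i i = 1
  · obtain ⟨i, hi⟩ := hd
    have hf : Function.Injective (fun _ : Fin 1 => i) := Function.injective_of_subsingleton _
    have hH : A.submatrix (fun _ : Fin 1 => i) (fun _ : Fin 1 => i) = 1 := by
      ext a b
      obtain rfl := Subsingleton.elim a b
      simp [hi]
    obtain ⟨D, hD, hAD⟩ := Congruent.exists_schur hA hf hH (Matrix.mul_one 1)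
    have hc := card_compl_range hf
    rw [Fintype.card_fin, hN] at hc
    obtain ⟨p, q, hpq, hDE⟩ := ih _ (by omega) _ D hD rfl
    generalize Fintype.card {x // x ∉ Set.range fun _ : Fin 1 => i} = M at *
    subst hc
    refine ⟨p + 1, q, by omega, (hAD.trans (hDE.fromBlocks 1)).trans ?_⟩
    rw [← normalForm_succ_left]
    simpa using Congruent.submatrix ((normalForm (p + 1) q (1 + M)).submatrix finSumFinEquiv
      finSumFinEquiv) finSumFinEquiv.symm
  have hd0 : ∀ i, A i i = 0 := fun i => (zmod_two_cases (A i i)).resolve_right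
    fun h => hd ⟨i, h⟩
  by_cases hz : A = 0
  · refine ⟨0, 0, by omega, ?_⟩
    have h0 : normalForm 0 0 N = A.submatrix (Fintype.equivFinOfCardEq hN).symm
        (Fintype.equivFinOfCardEq hN).symm := by
      ext i j
      simp [normalForm, hz]
    rw [h0]
    exact Congruent.submatrix A _
  obtain ⟨i, j, hij⟩ : ∃ i j, A i j ≠ 0 := by
    by_contra! h
    exact hz (Matrix.ext h)
  have hij1 : A i j = 1 := (zmod_two_cases (A i j)).resolve_left hij
  have hji1 : A j i = 1 := (congrFun (congrFun hA i) j).trans hij1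
  have hne : i ≠ j := by
    rintro rfl
    exact hij (hd0 i)
  have hf : Function.Injective ![i, j] := by
    intro a b
    fin_cases a <;> fin_cases b <;> simp [hne, hne.symm]
  have hH : A.submatrix ![i, j] ![i, j] = !![0, 1; 1, 0] := by
    ext a b
    fin_cases a <;> fin_cases b <;> simp [hd0, hij1, hji1]
  obtain ⟨D, hD, hAD⟩ := Congruent.exists_schur hA hf hH (by decide)
  have hc := card_compl_range hf
  rw [Fintype.card_fin, hN] at hc
  obtain ⟨p, q, hpq, hDE⟩ := ih _ (by omega) _ D hD rfl
  have hD0 : ∀ x, D x x = 0 := fun x => hAD.diag_eq_zero hA hd0 (Sum.inr x)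
  have hE0 := hDE.diag_eq_zero hD hD0
  generalize Fintype.card {x // x ∉ Set.range ![i, j]} = M at *
  subst hc
  -- A positive `p` would put a `1` in the top left corner of an alternating matrix.
  obtain rfl : p = 0 := by
    by_contra hp
    have := hE0 ⟨0, by omega⟩
    simp [normalForm, partner, Nat.pos_of_ne_zero hp] at this
  refine ⟨0, q + 1, by omega, (hAD.trans (hDE.fromBlocks _)).trans ?_⟩
  rw [← normalForm_succ_right]
  simpa using Congruent.submatrix ((normalForm 0 (q + 1) (2 + M)).submatrix finSumFinEquiv
    finSumFinEquiv) finSumFinEquiv.symm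

end SymmetricNormalForm
/-- Congruence normal form of a symmetric matrix over `𝔽₂`: any symmetric
`A : Matrix (Fin n) (Fin n) (ZMod 2)` is congruent, via an invertible `P`, to a direct
sum of a `p × p` identity block, `q` hyperbolic blocks `!![0,1;1,0]`, and a zero block,
with `p + 2q = rank A`. -/
theorem symmetric_normal_form_zmod2 (n : ℕ) (A : Matrix (Fin n) (Fin n) (ZMod 2))
    (hA : Aᵀ = A) :
    ∃ (P : Matrix (Fin n) (Fin n) (ZMod 2)) (p q : ℕ),
      IsUnit P ∧ p + 2 * q = A.rank ∧ p + 2 * q ≤ n ∧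
      (∀ i : Fin n, (i : ℕ) < p → (P * A * Pᵀ) i i = 1) ∧
      (∀ t : ℕ, t < q → ∀ (hi : p + 2 * t < n) (hj : p + 2 * t + 1 < n),
        (P * A * Pᵀ) ⟨p + 2 * t, hi⟩ ⟨p + 2 * t + 1, hj⟩ = 1 ∧
        (P * A * Pᵀ) ⟨p + 2 * t + 1, hj⟩ ⟨p + 2 * t, hi⟩ = 1) ∧
      (∀ i j : Fin n,
        ¬(i = j ∧ (i : ℕ) < p) →
        ¬(∃ t : ℕ, t < q ∧ (((i : ℕ) = p + 2 * t ∧ (j : ℕ) = p + 2 * t + 1) ∨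
            ((i : ℕ) = p + 2 * t + 1 ∧ (j : ℕ) = p + 2 * t))) →
        (P * A * Pᵀ) i j = 0) := by
  obtain ⟨p, q, hpq, P, Q, hPQ, hQP, hB⟩ :=
    SymmetricNormalForm.exists_congruent_normalForm n (Fin n) A hA (Fintype.card_fin n)
  have hP : IsUnit P := ⟨⟨P, Q, hPQ, hQP⟩, rfl⟩
  have hPdet : IsUnit P.det := (isUnit_iff_isUnit_det P).1 hP
  have hPtdet : IsUnit Pᵀ.det := by rwa [det_transpose]
  refine ⟨P, p, q, hP, ?_, hpq, ?_, ?_, ?_⟩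
  · rw [← SymmetricNormalForm.rank_normalForm hpq, ← hB,
      rank_mul_eq_left_of_isUnit_det _ _ hPtdet, rank_mul_eq_right_of_isUnit_det _ _ hPdet]
  all_goals simp only [hB, SymmetricNormalForm.normalForm, of_apply]
  · grind [SymmetricNormalForm.partner]
  · grind [SymmetricNormalForm.partner]
  · intro i j h1 h2
    rw [if_neg]
    rintro ⟨hi, hj⟩
    apply h2
    refine ⟨(i - p) / 2, ?_⟩
    unfold SymmetricNormalForm.partner at hj
    grind
end

section
/- Let r ≥ 1 and c : ZMod r → ZMod 2, let M := Matrix.circulant c, and let M(X) := ∑_{i=0}^{r−1} (c i) • X^i ∈ (ZMod 2)[X] (sum over the representatives 0 ≤ i < r). Let K := gcd(M(X), X^r − 1) in (ZMod 2)[X] and k := K.natDegree. Then M.rank = r − k. -/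
/-!
Let `f = X ^ r - 1`. The map `v ↦ ∑ v i • xⁱ` identifies vectors indexed by `ZMod r` with
`A = (ZMod 2)[X] / (f)`, and the circulant matrix of `c` becomes multiplication by the class of
`M(X)`, because `x ^ r = 1` (`toAdjoinRoot_mulVec`). Its image is the ideal generated by `M(X)`
in `A`. By Bézout this ideal is the kernel of the projection `A → (ZMod 2)[X] / (K)`, where
`K = gcd(M(X), f)` (`ker_gcdProj`), so rank-nullity gives dimension `r - deg K`.
-/

open Polynomial

namespace CirculantRank

/-- The quotient ring `(ZMod 2)[X] / (X ^ r - 1)`. -/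
abbrev CyclicAlg (r : ℕ) : Type := AdjoinRoot ((X : (ZMod 2)[X]) ^ r - 1)

/-- The class of `X` in `(ZMod 2)[X] / (X ^ r - 1)`. -/
noncomputable abbrev gen (r : ℕ) : CyclicAlg r := AdjoinRoot.root ((X : (ZMod 2)[X]) ^ r - 1)

lemma gen_pow (r : ℕ) : gen r ^ r = 1 := by
  have h := AdjoinRoot.mk_self (f := (X : (ZMod 2)[X]) ^ r - 1)
  rw [map_sub, map_pow, AdjoinRoot.mk_X, map_one] at h
  exact sub_eq_zero.mp h

lemma gen_pow_mod (r n : ℕ) : gen r ^ (n % r) = gen r ^ n := by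
  conv_rhs => rw [← Nat.mod_add_div n r, pow_add, pow_mul, gen_pow, one_pow, mul_one]

lemma gen_pow_val_add (r : ℕ) [NeZero r] (i j : ZMod r) :
    gen r ^ (i + j).val = gen r ^ i.val * gen r ^ j.val := by
  rw [ZMod.val_add, gen_pow_mod, pow_add]

/-- The linear map sending a vector `v` to the class of the polynomial `∑ v i Xⁱ`. -/
noncomputable def toAdjoinRoot (r : ℕ) [NeZero r] : (ZMod r → ZMod 2) →ₗ[ZMod 2] CyclicAlg r :=
  Fintype.linearCombination (ZMod 2) fun i : ZMod r => gen r ^ i.val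

lemma toAdjoinRoot_apply (r : ℕ) [NeZero r] (v : ZMod r → ZMod 2) :
    toAdjoinRoot r v = ∑ i, v i • gen r ^ i.val := rfl

lemma toAdjoinRoot_eq_mk (r : ℕ) [NeZero r] (v : ZMod r → ZMod 2) :
    toAdjoinRoot r v = AdjoinRoot.mk _ (∑ i : ZMod r, C (v i) * X ^ i.val) := by
  simp [toAdjoinRoot_apply, Algebra.smul_def, AdjoinRoot.algebraMap_eq]

lemma toAdjoinRoot_mulVec (r : ℕ) [NeZero r] (c v : ZMod r → ZMod 2) :
    toAdjoinRoot r ((Matrix.circulant c).mulVec v) = toAdjoinRoot r c * toAdjoinRoot r v := by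
  simp only [toAdjoinRoot_apply, Matrix.mulVec, dotProduct, Matrix.circulant_apply,
    Finset.sum_smul, Finset.sum_mul_sum]
  rw [Finset.sum_comm]
  rw [Finset.sum_comm (f := fun i j => (c i • gen r ^ i.val) * (v j • gen r ^ j.val))]
  refine Finset.sum_congr rfl fun j _ => ?_
  -- reindex the rows by `i ↦ i - j`
  refine Fintype.sum_equiv (Equiv.subRight j) _ _ fun i => ?_
  rw [smul_mul_smul_comm, ← gen_pow_val_add]
  simp

lemma toAdjoinRoot_surjective (r : ℕ) [NeZero r] : Function.Surjective (toAdjoinRoot r) := by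
  intro a
  induction a using AdjoinRoot.induction_on with
  | ih p =>
  rw [← LinearMap.mem_range]
  induction p using Polynomial.induction_on' with
  | add p q hp hq => rw [map_add]; exact add_mem hp hq
  | monomial n b =>
    refine ⟨Pi.single (n : ZMod r) b, ?_⟩
    rw [toAdjoinRoot, Fintype.linearCombination_apply_single, ZMod.val_natCast, gen_pow_mod,
      ← C_mul_X_pow_eq_monomial, Algebra.smul_def, AdjoinRoot.algebraMap_eq]
    simp

lemma finrank_cyclicAlg (r : ℕ) : Module.finrank (ZMod 2) (CyclicAlg r) = r := by
  have h := finrank_quotient_span_eq_natDegree (f := (X : (ZMod 2)[X]) ^ r - 1)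
  rw [← C_1, natDegree_X_pow_sub_C] at h
  exact h

lemma X_pow_sub_one_ne_zero (r : ℕ) [NeZero r] : (X : (ZMod 2)[X]) ^ r - 1 ≠ 0 := by
  simpa using X_pow_sub_C_ne_zero (NeZero.pos r) (1 : ZMod 2)

instance (r : ℕ) [NeZero r] : Module.Finite (ZMod 2) (CyclicAlg r) :=
  (AdjoinRoot.powerBasis (X_pow_sub_one_ne_zero r)).finite

lemma toAdjoinRoot_injective (r : ℕ) [NeZero r] : Function.Injective (toAdjoinRoot r) := by
  refine (LinearMap.injective_iff_surjective_of_finrank_eq_finrank ?_).mpr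
    (toAdjoinRoot_surjective r)
  rw [finrank_cyclicAlg, Module.finrank_fintype_fun_eq_card, ZMod.card]

/-- The projection from `(ZMod 2)[X] / (f)` onto `(ZMod 2)[X] / (gcd p f)`. -/
noncomputable def gcdProj (p f : (ZMod 2)[X]) :
    AdjoinRoot f →ₗ[ZMod 2] AdjoinRoot (EuclideanDomain.gcd p f) :=
  (AdjoinRoot.algHomOfDvd (ZMod 2) f _ (EuclideanDomain.gcd_dvd_right p f)).toLinearMap

lemma gcdProj_mk (p f q : (ZMod 2)[X]) :
    gcdProj p f (AdjoinRoot.mk f q) = AdjoinRoot.mk _ q := by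
  rw [gcdProj, AlgHom.toLinearMap_apply, ← AdjoinRoot.aeval_eq, ← aeval_algHom_apply,
    AdjoinRoot.algHomOfDvd_root, AdjoinRoot.aeval_eq]

/-- Bézout: modulo `f`, the multiples of `gcd p f` are the multiples of `p`. -/
lemma ker_gcdProj (p f : (ZMod 2)[X]) :
    LinearMap.ker (gcdProj p f) =
      LinearMap.range (LinearMap.mulLeft (ZMod 2) (AdjoinRoot.mk f p)) := by
  ext a
  induction a using AdjoinRoot.induction_on with
  | ih q =>
  rw [LinearMap.mem_ker, gcdProj_mk, AdjoinRoot.mk_eq_zero, LinearMap.mem_range]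
  constructor
  · rintro ⟨s, rfl⟩
    refine ⟨AdjoinRoot.mk f (EuclideanDomain.gcdA p f * s), ?_⟩
    rw [LinearMap.mulLeft_apply, ← map_mul, AdjoinRoot.mk_eq_mk]
    conv in (EuclideanDomain.gcd p f) => rw [EuclideanDomain.gcd_eq_gcd_ab]
    exact ⟨-(EuclideanDomain.gcdB p f * s), by ring⟩
  · rintro ⟨b, hb⟩
    induction b using AdjoinRoot.induction_on with
    | ih s =>
    rw [LinearMap.mulLeft_apply, ← map_mul, AdjoinRoot.mk_eq_mk] at hb
    have h1 := (EuclideanDomain.gcd_dvd_right p f).trans hb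
    have h2 := (EuclideanDomain.gcd_dvd_left p f).mul_right s
    exact (dvd_sub_right h2).mp h1

end CirculantRank

open CirculantRank in
/-- The rank of a binary circulant matrix: if `M(X)` is the polynomial associated with
the circulant matrix `M = circulant c`, `K = gcd(M(X), Xʳ − 1)`, and `k = deg K`,
then `rank M = r − k`. -/
theorem rank_circulant (r : ℕ) [NeZero r] (c : ZMod r → ZMod 2) :
    (Matrix.circulant c).rank =
      r - (EuclideanDomain.gcd
            (∑ i : ZMod r, Polynomial.C (c i) * (X : Polynomial (ZMod 2)) ^ i.val)
            ((X : Polynomial (ZMod 2)) ^ r - 1)).natDegree := by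
  set p : (ZMod 2)[X] := ∑ i : ZMod r, C (c i) * X ^ i.val with hp
  set φ := gcdProj p ((X : (ZMod 2)[X]) ^ r - 1) with hφ
  have hcomp : toAdjoinRoot r ∘ₗ (Matrix.circulant c).mulVecLin =
      LinearMap.mulLeft (ZMod 2) (AdjoinRoot.mk _ p) ∘ₗ toAdjoinRoot r := by
    ext1 v
    rw [hp, ← toAdjoinRoot_eq_mk]
    exact LinearMap.ext fun _ => toAdjoinRoot_mulVec r c _
  have hrank : (Matrix.circulant c).rank = Module.finrank (ZMod 2) (LinearMap.ker φ) := by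
    rw [hφ, ker_gcdProj, ← LinearMap.range_comp_of_range_eq_top _
      (LinearMap.range_eq_top.mpr (toAdjoinRoot_surjective r)), ← hcomp, LinearMap.range_comp]
    exact (Submodule.equivMapOfInjective _ (toAdjoinRoot_injective r) _).finrank_eq
  have hsurj : Function.Surjective φ := by
    intro a
    induction a using AdjoinRoot.induction_on with
    | ih q => exact ⟨AdjoinRoot.mk _ q, gcdProj_mk _ _ q⟩
  have hK : Module.finrank (ZMod 2) (LinearMap.range φ) =
      (EuclideanDomain.gcd p ((X : (ZMod 2)[X]) ^ r - 1)).natDegree := by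
    rw [LinearMap.range_eq_top.mpr hsurj, finrank_top]
    exact finrank_quotient_span_eq_natDegree
  have hadd := LinearMap.finrank_range_add_finrank_ker φ
  rw [finrank_cyclicAlg, hK] at hadd
  omega
end

section
/- Let p, q ≥ 1 and r = p * q. Define c : ZMod r → ZMod 2 by c i = 1 if p divides the representative of i in [0, r) and c i = 0 otherwise. Then (Matrix.circulant c).rank = p. -/
/-!
The entry at `(i, j)` is `1` exactly when `i` and `j` have the same image under the reduction
`ZMod r → ZMod p`. So the circulant matrix is the `p × p` identity matrix with rows and columns
repeated along the reduction map; conversely, as reduction is surjective, a choice of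
representatives exhibits the identity as a submatrix of the circulant matrix. Passing to a
submatrix (with repetitions) does not increase rank, so both matrices have rank `p`.
-/

/-- Let `r = p·q` and let `c : ZMod r → ZMod 2` be the indicator of the multiples of `p`
(the first row `c` has a `1` exactly in positions divisible by `p`).  Then the circulant
matrix with first row `c` has rank `p`. -/
theorem rank_circulant_multiples (p q : ℕ) (hp : 1 ≤ p) (hq : 1 ≤ q)
    (r : ℕ) (hr : r = p * q) [NeZero r]
    (c : ZMod r → ZMod 2)
    (hc : ∀ i : ZMod r, c i = if p ∣ i.val then 1 else 0) :
    (Matrix.circulant c).rank = p := by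
  haveI : NeZero p := ⟨by omega⟩
  have hdvd : p ∣ r := ⟨q, hr⟩
  let f : ZMod r →+* ZMod p := ZMod.castHom hdvd (ZMod p)
  have hf : ∀ i : ZMod r, p ∣ i.val ↔ f i = 0 := fun i => by
    rw [← ZMod.natCast_eq_zero_iff, ZMod.natCast_val, ZMod.castHom_apply]
  have key : Matrix.circulant c = (1 : Matrix (ZMod p) (ZMod p) (ZMod 2)).submatrix f f := by
    ext i j
    simp only [Matrix.circulant_apply, hc, hf, map_sub, sub_eq_zero, Matrix.submatrix_apply,
      Matrix.one_apply]
  have hone : (1 : Matrix (ZMod p) (ZMod p) (ZMod 2)).rank = p := by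
    rw [Matrix.rank_one, ZMod.card]
  obtain ⟨s, hs⟩ := (ZMod.castHom_surjective hdvd).hasRightInverse
  have hsec : (Matrix.circulant c).submatrix s s = 1 := by
    have hfs : f ∘ s = id := funext hs
    rw [key, Matrix.submatrix_submatrix, hfs, Matrix.submatrix_id_id]
  apply le_antisymm
  · rw [key]
    exact (Matrix.rank_submatrix_le _ _ _).trans hone.le
  · calc p = ((Matrix.circulant c).submatrix s s).rank := by rw [hsec, hone]
      _ ≤ _ := Matrix.rank_submatrix_le _ _ _
end

section
/- Let p, q ≥ 1 and r = p * q. Define c : ZMod r → ZMod 2 by c i = 1 if the representative of i in [0, r) is strictly less than p, and c i = 0 otherwise. Then (Matrix.circulant c).rank = r − p + 1. -/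
/-!
The kernel of the circulant matrix consists of the vectors `v` on `ZMod r` all of whose cyclic
windows `v i + v (i - 1) + ⋯ + v (i - p + 1)` vanish (`circulant_mulVec`). Subtracting two
consecutive windows gives `v i = v (i - p)`, so such a `v` is `p`-periodic; since `p ∣ r` it is the
pullback of a function `u` on `ZMod p` along the reduction `ZMod r → ZMod p`. For a pullback every
window sum equals the full sum of `u`. Hence the kernel is isomorphic to the space of functions
on `ZMod p` with sum zero, which has dimension `p - 1`, and rank-nullity gives the result.
-/

open Finset

theorem sum_zmod_eq_sum_range {n : ℕ} [NeZero n] (g : ZMod n → ZMod 2) :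
    ∑ k, g k = ∑ k ∈ range n, g (k : ZMod n) := by
  refine sum_bij' (fun k _ => k.val) (fun k _ => (k : ZMod n)) ?_ ?_ ?_ ?_ ?_
  · intro a _; simpa using ZMod.val_lt a
  · simp
  · simp
  · intro a ha; exact ZMod.val_cast_of_lt (by simpa using ha)
  · simp

/-- Applying the circulant matrix amounts to summing over cyclic windows of length `p`. -/
theorem circulant_mulVec {p r : ℕ} [NeZero r] (hpr : p ≤ r) (c : ZMod r → ZMod 2)
    (hc : ∀ i : ZMod r, c i = if i.val < p then 1 else 0) (v : ZMod r → ZMod 2) (i : ZMod r) :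
    (Matrix.circulant c).mulVec v i = ∑ k ∈ range p, v (i - (k : ZMod r)) := by
  have h1 : (Matrix.circulant c).mulVec v i = ∑ k, c k * v (i - k) := by
    simp only [Matrix.mulVec, dotProduct, Matrix.circulant_apply]
    exact Fintype.sum_equiv (Equiv.subLeft i) _ _ (by simp)
  rw [h1, sum_zmod_eq_sum_range]
  symm
  apply sum_subset_zero_on_sdiff
  · exact range_subset_range.2 hpr
  · intro k hk
    simp only [mem_sdiff, mem_range] at hk
    rw [hc, ZMod.val_cast_of_lt hk.1, if_neg hk.2, zero_mul]
  · intro k hk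
    rw [mem_range] at hk
    rw [hc, ZMod.val_cast_of_lt (hk.trans_le hpr), if_pos hk, one_mul]

theorem finrank_ker_sum (p : ℕ) [NeZero p] :
    Module.finrank (ZMod 2)
      (LinearMap.ker (∑ k : ZMod p, LinearMap.proj (R := ZMod 2) (φ := fun _ => ZMod 2) k)) + 1
      = p := by
  set S := ∑ k : ZMod p, LinearMap.proj (R := ZMod 2) (φ := fun _ : ZMod p => ZMod 2) k with hS
  have hsurj : LinearMap.range S = ⊤ := by
    rw [LinearMap.range_eq_top]
    intro a
    exact ⟨Pi.single 0 a, by simp [hS, LinearMap.sum_apply]⟩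
  have h := S.finrank_range_add_finrank_ker
  rw [hsurj, finrank_top, Module.finrank_self, Module.finrank_fintype_fun_eq_card, ZMod.card] at h
  omega

/-- A vector all of whose cyclic windows of length `p` sum to zero is `p`-periodic. -/
theorem periodic_of_window {p r : ℕ} (v : ZMod r → ZMod 2)
    (h : ∀ i, ∑ k ∈ range p, v (i - (k : ZMod r)) = 0) (i : ZMod r) (m : ℕ) :
    v (i + (p * m : ℕ)) = v i := by
  have step : ∀ i, v (i + p) = v i := by
    intro i
    -- split off either end of the window `i, …, i + p` of length `p + 1`
    have e1 := sum_range_succ (fun k : ℕ => v (i + p - (k : ZMod r))) p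
    have e2 := sum_range_succ' (fun k : ℕ => v (i + p - (k : ZMod r))) p
    have h2 := h (i + p - 1)
    have h3 : ∑ k ∈ range p, v (i + p - ((k + 1 : ℕ) : ZMod r)) = 0 := by
      rw [← h2]
      refine sum_congr rfl fun k _ => ?_
      congr 1
      push_cast
      ring
    rw [h3, e1, h (i + p)] at e2
    simpa using e2.symm
  induction m with
  | zero => simp
  | succ m ih =>
    rw [← ih, ← step (i + (p * m : ℕ))]
    congr 1
    push_cast
    ring

/-- Let `r = p·q` and let `c : ZMod r → ZMod 2` be the indicator of `{0, 1, …, p−1}`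
(the first row has `1`s exactly in the first `p` positions).  Then the circulant matrix
with first row `c` has rank `r − p + 1`. -/
theorem rank_circulant_initial_segment (p q : ℕ) (hp : 1 ≤ p) (hq : 1 ≤ q)
    (r : ℕ) (hr : r = p * q) [NeZero r]
    (c : ZMod r → ZMod 2)
    (hc : ∀ i : ZMod r, c i = if i.val < p then 1 else 0) :
    (Matrix.circulant c).rank = r - p + 1 := by
  have hdvd : p ∣ r := ⟨q, hr⟩
  have hpr : p ≤ r := Nat.le_of_dvd (NeZero.pos r) hdvd
  have : NeZero p := ⟨by omega⟩
  have hmul := circulant_mulVec hpr c hc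
  set π := ZMod.castHom hdvd (ZMod p)
  set T := LinearMap.funLeft (ZMod 2) (ZMod 2) π
  set S := ∑ k : ZMod p, LinearMap.proj (R := ZMod 2) (φ := fun _ : ZMod p => ZMod 2) k with hS
  have hTinj : Function.Injective T :=
    LinearMap.funLeft_injective_of_surjective _ _ _ (ZMod.ringHom_surjective π)
  have hT : ∀ u i, (Matrix.circulant c).mulVec (T u) i = S u := by
    intro u i
    rw [hmul]
    have : S u = ∑ k, u (π i - k) := by
      simp only [hS, LinearMap.sum_apply, LinearMap.proj_apply]
      exact (Fintype.sum_equiv (Equiv.subLeft (π i)) _ _ (by simp)).symm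
    rw [this, sum_zmod_eq_sum_range]
    refine sum_congr rfl fun k _ => ?_
    simp [T, LinearMap.funLeft_apply]
  have hker : LinearMap.ker (Matrix.circulant c).mulVecLin = (LinearMap.ker S).map T := by
    ext v
    simp only [Submodule.mem_map, LinearMap.mem_ker, Matrix.mulVecLin_apply]
    constructor
    · intro hv
      have hper := periodic_of_window (p := p) v (fun i => by rw [← hmul, hv]; rfl)
      have hTu : T (fun a => v (a.val : ZMod r)) = v := by
        ext i
        have hi : (π i).val = i.val % p := by
          rw [← ZMod.val_natCast, ← map_natCast π, ZMod.natCast_zmod_val]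
        rw [LinearMap.funLeft_apply, hi, ← hper _ (i.val / p), ← Nat.cast_add, Nat.mod_add_div,
          ZMod.natCast_zmod_val]
      refine ⟨_, ?_, hTu⟩
      rw [← hT _ 0, hTu, hv]
      rfl
    · rintro ⟨u, hu, rfl⟩
      ext i
      rw [hT, hu]
      rfl
  have h1 := (Matrix.circulant c).mulVecLin.finrank_range_add_finrank_ker
  rw [hker, ← (Submodule.equivMapOfInjective T hTinj _).finrank_eq,
    Module.finrank_fintype_fun_eq_card, ZMod.card] at h1
  have h2 : Module.finrank (ZMod 2) (LinearMap.ker S) + 1 = p := finrank_ker_sum p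
  rw [Matrix.rank]
  omega
end

section
/- Let H be the Type-I quasi-cyclic parity-check matrix associated to an exponent matrix c : Fin J → Fin L → ZMod r (with r, J, L ≥ 1). Then H * Hᵀ = 0 (equivalently, the row space of H is contained in its null space, i.e. the binary code C(H) is dual-containing) if and only if for all i, j ∈ Fin J, the difference multiset D i j is multiplicity even. -/
/-!
The entry of `H * Hᵀ` at `((i, a), (j, b))` counts, modulo 2, the pairs `(l, x)` with
`a - x = c i l` and `b - x = c j l`. For each `l` the first equation forces `x = a - c i l`, and
the second then reads `c i l - c j l = a - b`. Hence the entry is the multiplicity of `a - b` in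
the difference multiset `D i j`, modulo 2 (`typeIH_mul_transpose_apply`), and every element of
`ZMod r` is of the form `a - b`.
-/

open Matrix

/-- The Type-I quasi-cyclic parity-check matrix associated with an exponent matrix
`c : Fin J → Fin L → ZMod r`: the `(j,l)` block is the circulant permutation matrix
with `1`s at positions `(a,b)` with `a − b = c j l`. -/
def typeIH (r J L : ℕ) (c : Fin J → Fin L → ZMod r) :
    Matrix (Fin J × ZMod r) (Fin L × ZMod r) (ZMod 2) :=
  Matrix.of fun p q => if p.2 - q.2 = c p.1 q.1 then 1 else 0

/-- The difference multiset `D i j = {c i l − c j l | l ∈ Fin L}` of two rows of the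
exponent matrix. -/
def diffMultiset (r J L : ℕ) (c : Fin J → Fin L → ZMod r) (i j : Fin J) :
    Multiset (ZMod r) :=
  (Finset.univ.val : Multiset (Fin L)).map fun l => c i l - c j l

theorem typeIH_mul_transpose_apply (r J L : ℕ) [NeZero r] (c : Fin J → Fin L → ZMod r)
    (i j : Fin J) (a b : ZMod r) :
    (typeIH r J L c * (typeIH r J L c)ᵀ) (i, a) (j, b) =
      (Multiset.count (a - b) (diffMultiset r J L c i j) : ZMod 2) := by
  have inner (l : Fin L) :
      (∑ x : ZMod r, (if a - x = c i l then (1 : ZMod 2) else 0) *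
        (if b - x = c j l then 1 else 0)) = if a - b = c i l - c j l then 1 else 0 := by
    rw [Finset.sum_eq_single (a - c i l)]
    · have h : b - (a - c i l) = c j l ↔ a - b = c i l - c j l := by
        constructor <;> intro h <;> linear_combination -h
      simp [h]
    · intro x _ hx
      have h : a - x ≠ c i l := fun h => hx (by linear_combination -h)
      simp [h]
    · simp
  rw [Matrix.mul_apply, Fintype.sum_prod_type]
  simp only [typeIH, Matrix.transpose_apply, Matrix.of_apply, inner]
  rw [Finset.sum_boole, diffMultiset, Multiset.count_map]
  rfl

/-- A Type-I QC-LDPC code is dual-containing (`H Hᵀ = 0`) iff every difference multiset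
`D i j` of rows of the exponent matrix is multiplicity even. -/
theorem typeI_dual_containing_iff (r J L : ℕ) [NeZero r] (hJ : 1 ≤ J) (hL : 1 ≤ L)
    (c : Fin J → Fin L → ZMod r) :
    typeIH r J L c * (typeIH r J L c)ᵀ = 0 ↔
      ∀ i j : Fin J, ∀ a : ZMod r,
        Even (Multiset.count a (diffMultiset r J L c i j)) := by
  constructor
  · intro h i j a
    have e := typeIH_mul_transpose_apply r J L c i j a 0
    rw [h, sub_zero] at e
    exact (ZMod.natCast_eq_zero_iff_even).1 e.symm
  · intro h
    ext ⟨i, a⟩ ⟨j, b⟩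
    rw [typeIH_mul_transpose_apply]
    exact (ZMod.natCast_eq_zero_iff_even).2 (h i j (a - b))
end

section
/- Let H be the Type-I quasi-cyclic parity-check matrix associated to an exponent matrix c : Fin J → Fin L → ZMod r (with r, J, L ≥ 1). Then H contains no 4-cycle (equivalently, the code has girth at least 6) if and only if for all i ≠ j in Fin J, the difference multiset D i j is multiplicity free. -/
/-!
A `1` of `H` at row `(i, a)` and column `(l, x)` says `a - x = c i l`. Hence two rows `(i, a)`,
`(j, b)` share a column in block `l` only if `c i l - c j l = a - b`, and in that case the column
is determined by `l`. Since distinct rows in the same block row share no column, a 4-cycle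
amounts to `i ≠ j` and two distinct `l`, `m` with `c i l - c j l = c i m - c j m`, that is, to a
repeated element of `D i j`.
-/

open Matrix

/-- A 4-cycle in a binary matrix: two distinct rows and two distinct columns whose four
intersections all hold a `1`. -/
def HasFourCycle {R C : Type*} (H : Matrix R C (ZMod 2)) : Prop :=
  ∃ (ρ ρ' : R) (γ γ' : C), ρ ≠ ρ' ∧ γ ≠ γ' ∧
    H ρ γ = 1 ∧ H ρ γ' = 1 ∧ H ρ' γ = 1 ∧ H ρ' γ' = 1

theorem typeIH_eq_one_iff {r J L : ℕ} (c : Fin J → Fin L → ZMod r)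
    (p : Fin J × ZMod r) (q : Fin L × ZMod r) :
    typeIH r J L c p q = 1 ↔ p.2 - q.2 = c p.1 q.1 := by
  simp [typeIH]

theorem count_diffMultiset_le_one_iff {r J L : ℕ} (c : Fin J → Fin L → ZMod r) (i j : Fin J) :
    (∀ a : ZMod r, Multiset.count a (diffMultiset r J L c i j) ≤ 1) ↔
      Function.Injective fun l => c i l - c j l := by
  rw [← Multiset.nodup_iff_count_le_one, diffMultiset]
  refine ⟨fun h l m hlm => ?_, fun h => Finset.univ.nodup.map h⟩
  exact Multiset.inj_on_of_nodup_map h l (Finset.mem_univ l) m (Finset.mem_univ m) hlm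

/-- A Type-I QC-LDPC code has girth at least 6 (no 4-cycles) iff every difference
multiset `D i j` for `i ≠ j` is multiplicity free. -/
theorem typeI_girth_six_iff (r J L : ℕ) [NeZero r] (hJ : 1 ≤ J) (hL : 1 ≤ L)
    (c : Fin J → Fin L → ZMod r) :
    ¬ HasFourCycle (typeIH r J L c) ↔
      ∀ i j : Fin J, i ≠ j → ∀ a : ZMod r,
        Multiset.count a (diffMultiset r J L c i j) ≤ 1 := by
  simp only [count_diffMultiset_le_one_iff]
  constructor
  · intro h i j hij l m hlm
    replace hlm : c i l - c j l = c i m - c j m := hlm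
    by_contra hne
    -- Offset the two rows by the repeated difference; the two columns are then forced.
    refine h ⟨(i, c i l - c j l), (j, 0), (l, -c j l), (m, -c j m), ?_, ?_, ?_⟩
    · exact fun e => hij (congrArg Prod.fst e)
    · exact fun e => hne (congrArg Prod.fst e)
    · simp [typeIH_eq_one_iff, ← eq_sub_iff_add_eq, hlm]
  · rintro h ⟨⟨i, a⟩, ⟨j, b⟩, ⟨l, x⟩, ⟨m, y⟩, hrow, hcol, h1, h2, h3, h4⟩
    simp only [typeIH_eq_one_iff] at h1 h2 h3 h4
    have hij : i ≠ j := by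
      rintro rfl
      exact hrow (Prod.ext rfl (sub_left_injective (h1.trans h3.symm)))
    have hlm : l = m := h i j hij (by
      change c i l - c j l = c i m - c j m
      rw [← h1, ← h2, ← h3, ← h4]
      ring)
    subst hlm
    exact hcol (Prod.ext rfl (sub_right_injective (h1.trans h2.symm)))
end

section
/- Let H be the Type-II quasi-cyclic parity-check matrix associated to support data E : Fin J → Fin L → Finset (ZMod r) with (E j l).card ≤ 2 for all j, l (with r, J, L ≥ 1). Then H * Hᵀ = 0 (equivalently, the row space of H is contained in its null space, i.e. the binary code C(H) is dual-containing) if and only if for all i, j ∈ Fin J, the difference multiset D i j is multiplicity even. -/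
/-! The `((i,a),(j,b))` entry of `H Hᵀ` counts, modulo 2, the columns `(l,c)` with `a - c ∈ E i l`
and `b - c ∈ E j l`. For fixed `l`, the map `c ↦ (a - c, b - c)` is a bijection from these `c` onto
the pairs `(s,t) ∈ E i l × E j l` with `s - t = a - b`, so the entry is the multiplicity of `a - b`
in `D i j`, reduced modulo 2 (`typeIIH_mul_transpose_apply`). Every element of `ZMod r` is of the
form `a - b`, and both directions follow. -/

open Matrix

/-- The Type-II quasi-cyclic parity-check matrix associated with support data
`E : Fin J → Fin L → Finset (ZMod r)`: the `(j,l)` block is the circulant matrix with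
`1`s at positions `(a,b)` with `a − b ∈ E j l` (a zero, monomial, or binomial circulant
when `|E j l| ≤ 2`). -/
def typeIIH (r J L : ℕ) (E : Fin J → Fin L → Finset (ZMod r)) :
    Matrix (Fin J × ZMod r) (Fin L × ZMod r) (ZMod 2) :=
  Matrix.of fun p q => if p.2 - q.2 ∈ E p.1 q.1 then 1 else 0

/-- The Type-II difference multiset `D i j`: the multiset sum over `l` of all
differences `s − t` with `s ∈ E i l` and `t ∈ E j l`. -/
def diffMultisetII (r J L : ℕ) (E : Fin J → Fin L → Finset (ZMod r)) (i j : Fin J) :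
    Multiset (ZMod r) :=
  (Finset.univ.val : Multiset (Fin L)).bind fun l =>
    (Finset.product (E i l) (E j l)).val.map fun st => st.1 - st.2

/-- For one block column, the overlaps of two circulant rows are counted by the multiplicity of the
row offset `a - b` among the differences of the supports. -/
theorem card_overlap_eq_count {r : ℕ} [NeZero r] (S T : Finset (ZMod r)) (a b : ZMod r) :
    (Finset.univ.filter fun c : ZMod r => a - c ∈ S ∧ b - c ∈ T).card =
      Multiset.count (a - b) ((Finset.product S T).val.map fun st => st.1 - st.2) := by
  rw [Multiset.count_map, ← Finset.filter_val, Finset.card_val]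
  refine Finset.card_bij (fun c _ => (a - c, b - c)) ?_ ?_ ?_
  · intro c hc
    rw [Finset.mem_filter] at hc ⊢
    exact ⟨Finset.mem_product.2 hc.2, by simp⟩
  · intro c _ d _ h
    exact sub_right_injective (Prod.ext_iff.1 h).1
  · rintro ⟨s, t⟩ h
    rw [Finset.mem_filter] at h
    obtain ⟨h1, h2⟩ := h
    obtain ⟨hs, ht⟩ := Finset.mem_product.1 h1
    dsimp only at h2 hs ht
    have h3 : b - (a - s) = t := by linear_combination -h2
    exact ⟨a - s, by simp [h3, hs, ht], by simp [h3]⟩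

theorem typeIIH_mul_transpose_apply (r J L : ℕ) [NeZero r]
    (E : Fin J → Fin L → Finset (ZMod r)) (i j : Fin J) (a b : ZMod r) :
    (typeIIH r J L E * (typeIIH r J L E)ᵀ) (i, a) (j, b) =
      (Multiset.count (a - b) (diffMultisetII r J L E i j) : ZMod 2) := by
  have hD : Multiset.count (a - b) (diffMultisetII r J L E i j) =
      ∑ l, Multiset.count (a - b)
        ((Finset.product (E i l) (E j l)).val.map fun st => st.1 - st.2) :=
    Multiset.count_bind
  simp only [hD, ← card_overlap_eq_count, Finset.card_filter, Nat.cast_sum, Matrix.mul_apply,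
    Fintype.sum_prod_type, typeIIH, Matrix.transpose_apply, Matrix.of_apply, ite_and]
  refine Finset.sum_congr rfl fun l _ => Finset.sum_congr rfl fun c _ => ?_
  split_ifs <;> simp

/-- A Type-II QC-LDPC code is dual-containing (`H Hᵀ = 0`) iff every difference
multiset `D i j` is multiplicity even. -/
theorem typeII_dual_containing_iff (r J L : ℕ) [NeZero r] (hJ : 1 ≤ J) (hL : 1 ≤ L)
    (E : Fin J → Fin L → Finset (ZMod r)) (hE : ∀ j l, (E j l).card ≤ 2) :
    typeIIH r J L E * (typeIIH r J L E)ᵀ = 0 ↔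
      ∀ i j : Fin J, ∀ a : ZMod r,
        Even (Multiset.count a (diffMultisetII r J L E i j)) := by
  constructor
  · intro h i j a
    have h0 := typeIIH_mul_transpose_apply r J L E i j a 0
    rw [h, sub_zero] at h0
    exact ZMod.natCast_eq_zero_iff_even.1 h0.symm
  · intro h
    ext ⟨i, a⟩ ⟨j, b⟩
    rw [typeIIH_mul_transpose_apply]
    exact ZMod.natCast_eq_zero_iff_even.2 (h i j _)
end

section
/- Let H be the Type-II quasi-cyclic parity-check matrix associated to support data E : Fin J → Fin L → Finset (ZMod r) with (E j l).card ≤ 2 for all j, l (with r, J, L ≥ 1). Then H contains no 4-cycle (girth at least 6) if and only if: for all i ≠ j in Fin J the difference multiset D i j is multiplicity free, and for every i ∈ Fin J every nonzero element of ZMod r occurs at most once in D i i. -/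
/-!
Two rows `(i, x)`, `(j, y)` of `H` share the column `(l, b)` exactly when `s = x - b` lies in
`E i l` and `t = y - b` lies in `E j l`; then `s - t = x - y`. So the common columns of the two
rows correspond to the representations of `x - y` as a difference counted by `D i j`, and a
4-cycle is a difference with two representations. The rows are distinct iff `i ≠ j` or
`x - y ≠ 0`, which is why `0` is excluded on the diagonal. `count_diffMultisetII_le_one_iff`
unfolds the multiplicity bound into uniqueness of the representation `(l, s, t)`.
-/

open Matrix

theorem count_diffMultisetII_le_one_iff {r J L : ℕ} (E : Fin J → Fin L → Finset (ZMod r))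
    (i j : Fin J) (a : ZMod r) :
    Multiset.count a (diffMultisetII r J L E i j) ≤ 1 ↔
      ∀ l s t l' s' t', s ∈ E i l → t ∈ E j l → s - t = a →
        s' ∈ E i l' → t' ∈ E j l' → s' - t' = a → l = l' ∧ s = s' ∧ t = t' := by
  have hD : diffMultisetII r J L E i j =
      (Finset.univ.sigma fun l => E i l ×ˢ E j l).val.map fun p => p.2.1 - p.2.2 := by
    simp only [diffMultisetII, Finset.sigma, Multiset.sigma, Multiset.map_bind,
      Multiset.map_map]
    rfl
  rw [hD, Multiset.count_map, ← Finset.filter_val, Finset.card_val, Finset.card_le_one]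
  constructor
  · intro h l s t l' s' t' hs ht ha hs' ht' ha'
    have := h ⟨l, s, t⟩ (by simp [hs, ht, ha]) ⟨l', s', t'⟩ (by simp [hs', ht', ha'])
    simpa using this
  · rintro h ⟨l, s, t⟩ hp ⟨l', s', t'⟩ hq
    simp only [Finset.mem_filter, Finset.mem_sigma, Finset.mem_univ, true_and,
      Finset.mem_product] at hp hq
    obtain ⟨rfl, rfl, rfl⟩ :=
      h l s t l' s' t' hp.1.1 hp.1.2 hp.2.symm hq.1.1 hq.1.2 hq.2.symm
    rfl

theorem typeIIH_eq_one_iff {r J L : ℕ} (E : Fin J → Fin L → Finset (ZMod r))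
    (j : Fin J) (x : ZMod r) (l : Fin L) (b : ZMod r) :
    typeIIH r J L E (j, x) (l, b) = 1 ↔ x - b ∈ E j l := by
  simp [typeIIH]

/-- If no 4-cycle exists, a difference `a` that can only arise from distinct rows occurs at
most once. -/
theorem count_le_one_of_not_hasFourCycle {r J L : ℕ} (E : Fin J → Fin L → Finset (ZMod r))
    (h : ¬ HasFourCycle (typeIIH r J L E)) (i j : Fin J) (a : ZMod r) (hija : i ≠ j ∨ a ≠ 0) :
    Multiset.count a (diffMultisetII r J L E i j) ≤ 1 := by
  rw [count_diffMultisetII_le_one_iff]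
  intro l s t l' s' t' hs ht ha hs' ht' ha'
  by_contra hne
  -- Translating the second representation by `s - s'` puts both into rows `(i, s)`, `(j, t)`.
  have hshift : t - (s - s') = t' := by linear_combination ha' - ha
  refine h ⟨(i, s), (j, t), (l, 0), (l', s - s'), ?_, ?_, ?_, ?_, ?_, ?_⟩
  · intro heq
    obtain ⟨rfl, rfl⟩ := Prod.mk.inj heq
    simp only [sub_self] at ha
    simp [← ha] at hija
  · intro heq
    obtain ⟨hl, hs0⟩ := Prod.mk.inj heq
    refine hne ⟨hl, sub_eq_zero.mp hs0.symm, ?_⟩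
    rw [← hshift, ← hs0, sub_zero]
  · simpa [typeIIH_eq_one_iff] using hs
  · simpa [typeIIH_eq_one_iff] using hs'
  · simpa [typeIIH_eq_one_iff] using ht
  · rwa [typeIIH_eq_one_iff, hshift]

/-- A Type-II QC-LDPC code has girth at least 6 (no 4-cycles) iff the difference
multisets `D i j` are multiplicity free for `i ≠ j`, and for each `i` every nonzero
element occurs at most once in `D i i`. -/
theorem typeII_girth_six_iff (r J L : ℕ) [NeZero r] (hJ : 1 ≤ J) (hL : 1 ≤ L)
    (E : Fin J → Fin L → Finset (ZMod r)) (hE : ∀ j l, (E j l).card ≤ 2) :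
    ¬ HasFourCycle (typeIIH r J L E) ↔
      ((∀ i j : Fin J, i ≠ j → ∀ a : ZMod r,
          Multiset.count a (diffMultisetII r J L E i j) ≤ 1) ∧
        (∀ i : Fin J, ∀ a : ZMod r, a ≠ 0 →
          Multiset.count a (diffMultisetII r J L E i i) ≤ 1)) := by
  constructor
  · intro h
    exact ⟨fun i j hij a => count_le_one_of_not_hasFourCycle E h i j a (Or.inl hij),
      fun i a ha => count_le_one_of_not_hasFourCycle E h i i a (Or.inr ha)⟩
  · rintro ⟨hoff, hdiag⟩ ⟨⟨i, x⟩, ⟨j, y⟩, ⟨l, b⟩, ⟨l', b'⟩, hρ, hγ, h1, h2, h3, h4⟩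
    rw [typeIIH_eq_one_iff] at h1 h2 h3 h4
    have hcount : Multiset.count (x - y) (diffMultisetII r J L E i j) ≤ 1 := by
      by_cases hij : i = j
      · subst hij
        exact hdiag i _ fun h0 => hρ (by rw [sub_eq_zero.mp h0])
      · exact hoff i j hij _
    obtain ⟨hl, hb, -⟩ := (count_diffMultisetII_le_one_iff E i j (x - y)).mp hcount
      l (x - b) (y - b) l' (x - b') (y - b') h1 h3 (by ring) h2 h4 (by ring)
    exact hγ (by rw [hl, sub_right_injective hb])
end

section
/- Let H be the Type-II quasi-cyclic parity-check matrix associated to support data E : Fin J → Fin L → Finset (ZMod r) with (E j l).card ≤ 2 for all j, l (with r, J, L ≥ 1), and suppose every column of H contains at least 2 nonzero entries (column weight at least 2, as in a (J,L)-regular code with J ≥ 2). Then it is impossible that both H * Hᵀ = 0 (H is dual-containing) and H contains no 4-cycle. In other words, there is no dual-containing QC-LDPC code with girth at least 6. -/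
/-! Two rows meeting in a column of weight at least two have inner product zero over `ZMod 2`,
so they share an even, nonzero number of columns. A second shared column together with the
first one is a 4-cycle. -/

open Matrix

/-- If `H Hᵀ = 0`, two distinct rows that share a column share a second one. -/
theorem hasFourCycle_of_mul_transpose_eq_zero {R C : Type*} [Fintype C]
    {H : Matrix R C (ZMod 2)} (hH : H * Hᵀ = 0) {ρ ρ' : R} (hρ : ρ ≠ ρ') {γ : C}
    (h : H ρ γ = 1) (h' : H ρ' γ = 1) : HasFourCycle H := by
  by_contra hno
  have hsum : ∑ c, H ρ c * H ρ' c = 0 := by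
    simpa [Matrix.mul_apply] using congrFun (congrFun hH ρ) ρ'
  have hbin : ∀ x y : ZMod 2, x * y ≠ 0 → x = 1 ∧ y = 1 := by decide
  -- Without a 4-cycle, `γ` is the only column contributing to the inner product.
  rw [Fintype.sum_eq_single γ, h, h'] at hsum
  · simp at hsum
  · intro c hc
    by_contra hne
    obtain ⟨h1, h2⟩ := hbin _ _ hne
    exact hno ⟨ρ, ρ', γ, c, hρ, hc.symm, h, h1, h', h2⟩

/-- There is no dual-containing QC-LDPC code with girth at least 6: a Type-II
quasi-cyclic parity-check matrix in which every column has weight at least 2 cannot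
satisfy `H Hᵀ = 0` and be free of 4-cycles at the same time. -/
theorem typeII_no_dual_containing_girth_six (r J L : ℕ) [NeZero r]
    (hJ : 1 ≤ J) (hL : 1 ≤ L)
    (E : Fin J → Fin L → Finset (ZMod r)) (hE : ∀ j l, (E j l).card ≤ 2)
    (hcol : ∀ γ : Fin L × ZMod r,
      2 ≤ (Finset.univ.filter fun ρ : Fin J × ZMod r => typeIIH r J L E ρ γ = 1).card) :
    ¬ (typeIIH r J L E * (typeIIH r J L E)ᵀ = 0 ∧
        ¬ HasFourCycle (typeIIH r J L E)) := by
  rintro ⟨hH, hno⟩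
  obtain ⟨ρ, hρ, ρ', hρ', hne⟩ := Finset.one_lt_card.mp (hcol (⟨0, hL⟩, 0))
  exact hno (hasFourCycle_of_mul_transpose_eq_zero hH hne
    (Finset.mem_filter.mp hρ).2 (Finset.mem_filter.mp hρ').2)
end

section
/- Let H : Matrix (Fin m) (Fin n) (ZMod 2) with H * Hᵀ = 0, and let d ≥ 1 be such that every nonzero a : Fin n → ZMod 2 with #{i : a i ≠ 0} < d satisfies H.mulVec a ≠ 0 (H is the parity check matrix of a dual-containing binary code of distance d). Consider the 2m vectors w_j := (H j, 0) and w'_j := (0, H j) in V = (Fin n → ZMod 2) × (Fin n → ZMod 2), i.e. the rows of the CSS matrix diag(H, H). Then: (1) any two of these 2m vectors have symplectic product 0 (the CSS matrix is self-orthogonal under the symplectic product); and (2) for every nonzero (z,x) ∈ V with #{i : z i ≠ 0 ∨ x i ≠ 0} < d, at least one of the 2m vectors has nonzero symplectic product with (z,x). Hence diag(H,H) defines a dual-containing [n, 2k−n] symplectic code of distance d. -/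
/-! The symplectic products of `(z, x)` with the rows `(H j, 0)` and `(0, H j)` of `diag(H, H)` are
the `j`-th entries of the syndromes `H x` and `H z` (`sp_left`, `sp_right`). Orthogonality of a row
`(H j, 0)` with `(0, H j')` is thus the entry `(j, j')` of `H Hᵀ = 0`, the other products being
trivially zero. If all products with `(z, x)` vanish then `H x = H z = 0`; as `x` and `z` have Hamming
weight at most the symplectic weight of `(z, x)`, which is less than `d`, both are zero. -/

open Matrix

lemma sp_left {m n : ℕ} (H : Matrix (Fin m) (Fin n) (ZMod 2)) (j : Fin m)
    (z x : Fin n → ZMod 2) : sp ((H j, 0) : V n) (z, x) = H.mulVec x j := by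
  simp [sp, Matrix.mulVec, dotProduct]

lemma sp_right {m n : ℕ} (H : Matrix (Fin m) (Fin n) (ZMod 2)) (j : Fin m)
    (z x : Fin n → ZMod 2) :
    sp (((0 : Fin n → ZMod 2), H j) : V n) (z, x) = H.mulVec z j := by
  simp [sp, Matrix.mulVec, dotProduct, mul_comm]

/-- The CSS construction: if `H` is the parity check matrix of a dual-containing binary
code (`H Hᵀ = 0`) of distance `d`, then the rows `(H j, 0)` and `(0, H j)` of
`diag(H,H)` are (1) pairwise orthogonal for the symplectic product, and (2) detect
every nonzero pair `(z,x)` of symplectic weight less than `d`; hence `diag(H,H)`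
defines a dual-containing symplectic code of distance `d`. -/
theorem css_construction (m n d : ℕ) (hd : 1 ≤ d)
    (H : Matrix (Fin m) (Fin n) (ZMod 2))
    (hdual : H * Hᵀ = 0)
    (hdist : ∀ a : Fin n → ZMod 2, a ≠ 0 →
      ({i | a i ≠ 0} : Set (Fin n)).ncard < d → H.mulVec a ≠ 0) :
    (∀ j j' : Fin m,
      sp ((H j, 0) : V n) ((H j', 0) : V n) = 0 ∧
      sp ((H j, 0) : V n) (((0 : Fin n → ZMod 2), H j') : V n) = 0 ∧
      sp (((0 : Fin n → ZMod 2), H j) : V n) (((0 : Fin n → ZMod 2), H j') : V n) = 0) ∧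
    (∀ z x : Fin n → ZMod 2, (z, x) ≠ (0, 0) →
      ({i | z i ≠ 0 ∨ x i ≠ 0} : Set (Fin n)).ncard < d →
      ∃ j : Fin m,
        sp ((H j, 0) : V n) (z, x) ≠ 0 ∨
        sp (((0 : Fin n → ZMod 2), H j) : V n) (z, x) ≠ 0) := by
  refine ⟨fun j j' => ⟨by simp [sp], ?_, by simp [sp]⟩, fun z x hne hw => ?_⟩
  · rw [sp_left]
    exact congrFun (congrFun hdual j) j'
  · by_contra! hcon
    -- The supports of `x` and of `z` lie in the symplectic support of `(z, x)`.
    have hx : x = 0 := by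
      by_contra hx0
      refine hdist x hx0
        (lt_of_le_of_lt (Set.ncard_le_ncard (fun i hi => Or.inr hi) (Set.toFinite _)) hw) ?_
      funext j
      rw [← sp_left H j z x]
      exact (hcon j).1
    have hz : z = 0 := by
      by_contra hz0
      refine hdist z hz0
        (lt_of_le_of_lt (Set.ncard_le_ncard (fun i hi => Or.inl hi) (Set.toFinite _)) hw) ?_
      funext j
      rw [← sp_right H j z x]
      exact (hcon j).2
    exact hne (by rw [hx, hz])
end
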